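/- arXiv:2302.06269 — 4 statements merged into one kernel-verified Lean document; each statement's English description precedes it below -/
import Mathlib

section
/- Let σ, β, R, Π be strictly positive real numbers and define the quartic polynomial Γ(X) = (σπ² + βπ²R) X⁴ − π²σR X³ − βΠ²R, viewed as a polynomial with real coefficients. Then Γ has exactly two distinct real roots, and, regarded as a polynomial over ℂ, its remaining two roots are non-real and are complex conjugates of each other. -/
open Polynomial

/-!
A polynomial `f` with only real roots `rᵢ ≠ 0` satisfies
`(f.coeff 1)² - 2 * f.coeff 0 * f.coeff 2 = (f.coeff 0)² * ∑ 1 / rᵢ²`. The left-hand side vanishes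
for `a X⁴ - b X³ - d`, so this quartic does not split over `ℝ`; since three real roots would leave
a linear factor, it has at most two, counted with multiplicity. As its leading and constant
coefficients have opposite signs, it has a root on each side of `0`. What is left is a real
quadratic factor without real roots, whose complex roots are conjugate.
-/

lemma multiset_eq_pair_of_card_le_two {α : Type*} {s : Multiset α} {a b : α} (hab : a ≠ b)
    (ha : a ∈ s) (hb : b ∈ s) (hs : s.card ≤ 2) : s = {a, b} := by
  refine (Multiset.eq_of_le_of_card_le ?_ (by simpa using hs)).symm
  exact (Multiset.le_iff_subset (by simpa using hab)).2
    (by simp [Multiset.insert_eq_cons, Multiset.cons_subset, ha, hb])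

section Splits

variable {K : Type*} [Field K]

lemma splits_prod_X_sub_C (s : Multiset K) : (s.map (X - C ·)).prod.Splits :=
  Splits.multisetProd fun g hg ↦ by
    obtain ⟨r, -, rfl⟩ := Multiset.mem_map.1 hg
    exact Splits.X_sub_C r

lemma card_roots_add_two_le_natDegree_of_not_splits {f : K[X]} (hf : ¬ f.Splits) :
    f.roots.card + 2 ≤ f.natDegree := by
  obtain ⟨q, hfq, hdeg, -⟩ := exists_prod_multiset_X_sub_C_mul f
  have hq : ¬ q.natDegree ≤ 1 := fun hq ↦ hf <| by
    rw [← hfq]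
    exact (splits_prod_X_sub_C f.roots).mul (Splits.of_natDegree_le_one hq)
  lia

lemma coeff_one_sq_sub_prod_X_sub_C {s : Multiset K} (hs : 0 ∉ s) :
    (s.map (X - C ·)).prod.coeff 1 ^ 2
        - 2 * (s.map (X - C ·)).prod.coeff 0 * (s.map (X - C ·)).prod.coeff 2
      = (s.map (X - C ·)).prod.coeff 0 ^ 2 * (s.map fun r ↦ (r ^ 2)⁻¹).sum := by
  induction s using Multiset.induction_on with
  | empty => simp [coeff_one]
  | cons r s ih =>
    obtain ⟨hr, hs⟩ : r ≠ 0 ∧ 0 ∉ s := by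
      simpa only [Multiset.mem_cons, not_or, ne_eq, eq_comm] using hs
    simp only [Multiset.map_cons, Multiset.prod_cons, Multiset.sum_cons]
    set g := (s.map (X - C ·)).prod
    have h0 : ((X - C r) * g).coeff 0 = -r * g.coeff 0 := by simp [sub_mul]
    have h1 : ((X - C r) * g).coeff 1 = g.coeff 0 - r * g.coeff 1 := by
      simp [sub_mul, coeff_X_mul]
    have h2 : ((X - C r) * g).coeff 2 = g.coeff 1 - r * g.coeff 2 := by
      simp [sub_mul, coeff_X_mul]
    rw [h0, h1, h2]
    linear_combination r ^ 2 * ih hs - g.coeff 0 ^ 2 * mul_inv_cancel₀ (pow_ne_zero 2 hr)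

lemma coeff_one_sq_sub_of_splits {f : K[X]} (hf : f.Splits) (h0 : f.coeff 0 ≠ 0) :
    f.coeff 1 ^ 2 - 2 * f.coeff 0 * f.coeff 2
      = f.coeff 0 ^ 2 * (f.roots.map fun r ↦ (r ^ 2)⁻¹).sum := by
  have hroots : 0 ∉ f.roots := fun h ↦ h0 <| by
    rw [coeff_zero_eq_eval_zero]
    exact (isRoot_of_mem_roots h).eq_zero
  have hcoeff (n : ℕ) : f.coeff n = f.leadingCoeff * (f.roots.map (X - C ·)).prod.coeff n := by
    rw [← coeff_C_mul, ← hf.eq_prod_roots]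
  rw [hcoeff 0, hcoeff 1, hcoeff 2]
  linear_combination f.leadingCoeff ^ 2 * coeff_one_sq_sub_prod_X_sub_C hroots

variable [LinearOrder K] [IsStrictOrderedRing K]

lemma two_mul_coeff_zero_mul_coeff_two_lt_of_splits {f : K[X]} (hf : f.Splits)
    (h0 : f.coeff 0 ≠ 0) (hdeg : f.natDegree ≠ 0) :
    2 * f.coeff 0 * f.coeff 2 < f.coeff 1 ^ 2 := by
  obtain ⟨r, hr⟩ := Multiset.exists_mem_of_ne_zero (hf.roots_ne_zero hdeg)
  have hr0 : r ≠ 0 := by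
    rintro rfl
    exact h0 (coeff_zero_eq_eval_zero f ▸ (isRoot_of_mem_roots hr).eq_zero)
  have hsum : 0 < (f.roots.map fun r ↦ (r ^ 2)⁻¹).sum :=
    calc 0 < (r ^ 2)⁻¹ := by positivity
      _ ≤ (f.roots.map fun r ↦ (r ^ 2)⁻¹).sum :=
        Multiset.single_le_sum (Multiset.forall_mem_map_iff.2 fun r _ ↦ by positivity) _
          (Multiset.mem_map_of_mem _ hr)
  rw [← sub_pos, coeff_one_sq_sub_of_splits hf h0]
  positivity

end Splits

section Real

open Filter

variable {f : ℝ[X]}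

lemma exists_pos_isRoot_of_leadingCoeff_mul_coeff_zero_neg (h : f.leadingCoeff * f.coeff 0 < 0) :
    ∃ x, 0 < x ∧ f.IsRoot x := by
  have hlc : f.leadingCoeff ≠ 0 := left_ne_zero_of_mul h.ne
  have hdeg : 0 < f.degree := by
    by_contra! hdeg
    rw [eq_C_of_degree_le_zero hdeg, leadingCoeff_C, coeff_C_zero] at h
    exact h.not_ge (mul_self_nonneg _)
  set g := C f.leadingCoeff * f
  have hg0 : g.eval 0 < 0 := by simpa [g, ← coeff_zero_eq_eval_zero] using h
  have hg : Tendsto (g.eval ·) atTop atTop := by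
    refine g.tendsto_atTop_of_leadingCoeff_nonneg ?_ ?_
    · rwa [degree_C_mul hlc]
    · simpa [g] using mul_self_nonneg f.leadingCoeff
  obtain ⟨T, hgT, hT⟩ := ((hg.eventually_gt_atTop 0).and (eventually_gt_atTop 0)).exists
  obtain ⟨x, hx, hgx⟩ := intermediate_value_Ioo hT.le g.continuousOn ⟨hg0, hgT⟩
  exact ⟨x, hx.1, by simpa [g, hlc] using hgx⟩

lemma exists_neg_isRoot_of_leadingCoeff_mul_coeff_zero_neg (heven : Even f.natDegree)
    (h : f.leadingCoeff * f.coeff 0 < 0) : ∃ x < 0, f.IsRoot x := by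
  obtain ⟨x, hx, hroot⟩ := exists_pos_isRoot_of_leadingCoeff_mul_coeff_zero_neg
    (f := f.comp (-X)) (by simpa [heven.neg_one_pow, coeff_zero_eq_eval_zero] using h)
  exact ⟨-x, neg_lt_zero.2 hx, by simpa using hroot⟩

lemma exists_map_roots_eq_conj_pair (hdeg : f.natDegree = 2) (hroots : f.roots = 0) :
    ∃ z : ℂ, z.im ≠ 0 ∧ (f.map (algebraMap ℝ ℂ)).roots = {z, starRingEnd ℂ z} := by
  have hf : f ≠ 0 := ne_zero_of_natDegree_gt (n := 1) (by lia)
  obtain ⟨z, hz⟩ := IsAlgClosed.exists_aeval_eq_zero ℂ f (by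
    rw [degree_eq_natDegree hf, hdeg]; decide)
  have hmem {w : ℂ} (hw : aeval w f = 0) : w ∈ (f.map (algebraMap ℝ ℂ)).roots :=
    mem_aroots.2 ⟨hf, hw⟩
  have him : z.im ≠ 0 := fun him ↦ by
    lift z to ℝ using him
    rw [← Complex.coe_algebraMap, aeval_algebraMap_apply_eq_algebraMap_eval, map_eq_zero] at hz
    simpa [hroots] using (mem_roots hf).2 hz
  refine ⟨z, him, multiset_eq_pair_of_card_le_two ?_ (hmem hz) (hmem ?_) ?_⟩
  · exact fun h ↦ him (Complex.conj_eq_iff_im.1 h.symm)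
  · rw [aeval_conj, hz, map_zero]
  · exact hdeg ▸ f.card_roots_map_le_natDegree

lemma exists_map_roots_eq_add_conj_pair (h : f.roots.card + 2 = f.natDegree) :
    ∃ z : ℂ, z.im ≠ 0 ∧ (f.map (algebraMap ℝ ℂ)).roots
      = f.roots.map (algebraMap ℝ ℂ) + {z, starRingEnd ℂ z} := by
  obtain ⟨q, hfq, hdeg, hq⟩ := exists_prod_multiset_X_sub_C_mul f
  obtain ⟨z, him, hz⟩ := exists_map_roots_eq_conj_pair (f := q) (by lia) hq
  have hprod : ((f.roots.map (X - C ·)).prod.map (algebraMap ℝ ℂ)).roots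
      = f.roots.map (algebraMap ℝ ℂ) := by
    rw [(splits_prod_X_sub_C f.roots).roots_map, roots_multiset_prod_X_sub_C]
  have hf : f.map (algebraMap ℝ ℂ) ≠ 0 := map_ne_zero (ne_zero_of_natDegree_gt (n := 0) (by lia))
  refine ⟨z, him, ?_⟩
  rw [← hprod, ← hz]
  nth_rw 1 [← hfq]
  rw [Polynomial.map_mul, roots_mul (by rwa [← Polynomial.map_mul, hfq])]

lemma exists_roots_eq_pair_of_natDegree_eq_four (hdeg : f.natDegree = 4) (hsplits : ¬ f.Splits)
    (hsign : f.leadingCoeff * f.coeff 0 < 0) : ∃ x y, x ≠ y ∧ f.roots = {x, y} := by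
  obtain ⟨x, hx, hfx⟩ := exists_pos_isRoot_of_leadingCoeff_mul_coeff_zero_neg hsign
  obtain ⟨y, hy, hfy⟩ :=
    exists_neg_isRoot_of_leadingCoeff_mul_coeff_zero_neg (hdeg ▸ by decide) hsign
  have hxy : x ≠ y := (hy.trans hx).ne'
  have hf : f ≠ 0 := ne_zero_of_natDegree_gt (n := 3) (by lia)
  refine ⟨x, y, hxy, multiset_eq_pair_of_card_le_two hxy ?_ ?_ ?_⟩
  · exact (mem_roots hf).2 hfx
  · exact (mem_roots hf).2 hfy
  · have := card_roots_add_two_le_natDegree_of_not_splits hsplits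
    lia

end Real

theorem stmt_1_general {a d : ℝ} (b : ℝ) (had : 0 < a * d) :
    ∃ x y : ℝ, x ≠ y ∧
      (∀ t : ℝ, (C a * X ^ 4 - C b * X ^ 3 - C d).eval t = 0 ↔ t = x ∨ t = y) ∧
      ∃ z : ℂ, z.im ≠ 0 ∧
        ((C a * X ^ 4 - C b * X ^ 3 - C d).map (algebraMap ℝ ℂ)).roots
          = {(x : ℂ), (y : ℂ), z, starRingEnd ℂ z} := by
  have ha : a ≠ 0 := left_ne_zero_of_mul had.ne'
  have hd : d ≠ 0 := right_ne_zero_of_mul had.ne'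
  set f : ℝ[X] := C a * X ^ 4 - C b * X ^ 3 - C d with hf
  have hdeg : f.natDegree = 4 := by rw [hf]; compute_degree!
  have h0 : f.coeff 0 = -d := by simp [hf]
  have h1 : f.coeff 1 = 0 := by simp [hf, coeff_X_pow]
  have h2 : f.coeff 2 = 0 := by simp [hf, coeff_X_pow]
  have h4 : f.leadingCoeff = a := by
    rw [leadingCoeff, hdeg]
    simp [hf, coeff_X_pow]
  have hsplits : ¬ f.Splits := fun hs ↦ by
    simpa [h1, h2] using
      two_mul_coeff_zero_mul_coeff_two_lt_of_splits hs (by simpa [h0]) (by simp [hdeg])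
  obtain ⟨x, y, hxy, hroots⟩ :=
    exists_roots_eq_pair_of_natDegree_eq_four hdeg hsplits (by rw [h4, h0]; linarith)
  obtain ⟨z, hz, hmap⟩ := exists_map_roots_eq_add_conj_pair (f := f) (by simp [hroots, hdeg])
  refine ⟨x, y, hxy, fun t ↦ ?_, z, hz, ?_⟩
  · have hf0 : f ≠ 0 := leadingCoeff_ne_zero.1 (h4 ▸ ha)
    rw [← IsRoot.def, ← mem_roots hf0, hroots]
    simp
  · rw [hmap, hroots]
    rfl

/-- The quartic Γ(X) = (σπ² + βπ²R)X⁴ − π²σR X³ − βΠ²R (with Π written `P`) has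
exactly two distinct real roots, and its two remaining complex roots are non-real
complex conjugates of each other. -/
theorem stmt_1 (σ β R P : ℝ) (hσ : 0 < σ) (hβ : 0 < β) (hR : 0 < R) (hP : 0 < P) :
    ∃ x y : ℝ, x ≠ y ∧
      (∀ t : ℝ, ((C (σ * Real.pi ^ 2 + β * Real.pi ^ 2 * R)) * X ^ 4
          - (C (Real.pi ^ 2 * σ * R)) * X ^ 3 - C (β * P ^ 2 * R)).eval t = 0 ↔
          t = x ∨ t = y) ∧
      ∃ z : ℂ, z.im ≠ 0 ∧
        (((C (σ * Real.pi ^ 2 + β * Real.pi ^ 2 * R)) * X ^ 4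
          - (C (Real.pi ^ 2 * σ * R)) * X ^ 3
          - C (β * P ^ 2 * R)).map (algebraMap ℝ ℂ)).roots
          = {(x : ℂ), (y : ℂ), z, (starRingEnd ℂ) z} :=
  stmt_1_general _ (mul_pos (by positivity) (by positivity))
end

section
/- Let σ, β, R, Π be strictly positive real numbers with R > √(Π/π), define Γ(a) = σπ²a⁴ + βπ²R a⁴ − π²σR a³ − βΠ²R, and let ā > 0 be the unique positive real root of Γ. Then √(Π/π) < ā < R. In particular, setting b̄ = Π/(π ā) (so that the ellipse with semi-axes ā and b̄ has area Π), one has ā > b̄. -/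
/-!
With `s = √(Π/π)`, the radius of the disc of area `Π`, the quartic is
`Γ(a) = π² (σ a³ (a - R) + β R (a⁴ - s⁴))`: surface tension pulls `a` towards `R` and elasticity
pulls it back towards `s`. At a root the two terms cancel; both would be nonnegative, one of them
positive, if `a ≥ R > s`, and both nonpositive, one of them negative, if `a ≤ s < R`.
-/

open Set

/-- The quartic `Γ` of the planar Kirchhoff–Plateau problem, whose positive root is the horizontal
semi-axis of the equilibrium elliptical cross-section of area `P`, appended to a circular midline
of radius `R`. -/
noncomputable def semiAxisQuartic (σ β R P a : ℝ) : ℝ :=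
  σ * Real.pi ^ 2 * a ^ 4 + β * Real.pi ^ 2 * R * a ^ 4
    - Real.pi ^ 2 * σ * R * a ^ 3 - β * P ^ 2 * R

theorem mem_Ioo_of_mul_sub_add_mul_sub_eq_zero {α K : Type*} [LinearOrder α]
    [Ring K] [LinearOrder K] [IsStrictOrderedRing K] {f g : α → K} {t : Set α} {x y z : α}
    {c d : K} (hf : StrictMonoOn f t) (hg : StrictMonoOn g t) (hx : x ∈ t) (hy : y ∈ t)
    (hz : z ∈ t) (hxy : x < y) (hc : 0 < c) (hd : 0 < d)
    (h : c * (f z - f y) + d * (g z - g x) = 0) : z ∈ Ioo x y := by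
  constructor
  · by_contra! hzx
    have hfz : c * (f z - f y) < 0 :=
      mul_neg_of_pos_of_neg hc (sub_neg.2 (hf hz hy (hzx.trans_lt hxy)))
    have hgz : d * (g z - g x) ≤ 0 :=
      mul_nonpos_of_nonneg_of_nonpos hd.le (sub_nonpos.2 (hg.monotoneOn hz hx hzx))
    exact (add_neg_of_neg_of_nonpos hfz hgz).ne h
  · by_contra! hyz
    have hfz : 0 ≤ c * (f z - f y) :=
      mul_nonneg hc.le (sub_nonneg.2 (hf.monotoneOn hy hz hyz))
    have hgz : 0 < d * (g z - g x) :=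
      mul_pos hd (sub_pos.2 (hg hx hz (hxy.trans_le hyz)))
    exact (add_pos_of_nonneg_of_pos hfz hgz).ne' h

theorem semiAxisQuartic_pi_mul_sq (σ β R s a : ℝ) :
    semiAxisQuartic σ β R (Real.pi * s ^ 2) a =
      Real.pi ^ 2 * (σ * a ^ 3 * (a - R) + β * R * (a ^ 4 - s ^ 4)) := by
  unfold semiAxisQuartic
  ring

theorem mem_Ioo_of_semiAxisQuartic_eq_zero {σ β R s a : ℝ} (hσ : 0 < σ) (hβ : 0 < β)
    (hs : 0 ≤ s) (hsR : s < R) (ha : 0 < a)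
    (hroot : semiAxisQuartic σ β R (Real.pi * s ^ 2) a = 0) : a ∈ Ioo s R := by
  have hR : 0 < R := hs.trans_lt hsR
  have hbalance : σ * a ^ 3 * (a - R) + β * R * (a ^ 4 - s ^ 4) = 0 := by
    rw [semiAxisQuartic_pi_mul_sq] at hroot
    exact (mul_eq_zero.1 hroot).resolve_left (pow_ne_zero 2 Real.pi_ne_zero)
  exact mem_Ioo_of_mul_sub_add_mul_sub_eq_zero (f := id) (g := (· ^ 4)) (t := Ici 0)
    strictMonoOn_id (pow_left_strictMonoOn₀ four_ne_zero) hs hR.le ha.le hsR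
    (mul_pos hσ (pow_pos ha 3)) (mul_pos hβ hR) hbalance

theorem sqrt_lt_iff_div_lt {x a : ℝ} (ha : 0 < a) : √x < a ↔ x / a < a := by
  rw [Real.sqrt_lt' ha, div_lt_iff₀ ha, sq]

/-- If R > √(Π/π) and ā is the unique positive real root of
Γ(a) = σπ²a⁴ + βπ²R a⁴ − π²σR a³ − βΠ²R (with Π written `P`), then
√(Π/π) < ā < R; in particular ā > b̄ where b̄ = Π/(π ā). -/
theorem stmt_5 (σ β R P abar : ℝ) (hσ : 0 < σ) (hβ : 0 < β) (hR : 0 < R) (hP : 0 < P)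
    (hRbig : Real.sqrt (P / Real.pi) < R)
    (habar : 0 < abar)
    (hroot : σ * Real.pi ^ 2 * abar ^ 4 + β * Real.pi ^ 2 * R * abar ^ 4
        - Real.pi ^ 2 * σ * R * abar ^ 3 - β * P ^ 2 * R = 0)
    (huniq : ∀ a : ℝ, 0 < a →
      σ * Real.pi ^ 2 * a ^ 4 + β * Real.pi ^ 2 * R * a ^ 4
        - Real.pi ^ 2 * σ * R * a ^ 3 - β * P ^ 2 * R = 0 → a = abar) :
    Real.sqrt (P / Real.pi) < abar ∧ abar < R ∧ P / (Real.pi * abar) < abar := by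
  have hP_eq : Real.pi * Real.sqrt (P / Real.pi) ^ 2 = P := by
    rw [Real.sq_sqrt (div_pos hP Real.pi_pos).le, mul_div_cancel₀ P Real.pi_ne_zero]
  have hquartic : semiAxisQuartic σ β R (Real.pi * Real.sqrt (P / Real.pi) ^ 2) abar = 0 := by
    rw [hP_eq]
    exact hroot
  obtain ⟨hlower, hupper⟩ :=
    mem_Ioo_of_semiAxisQuartic_eq_zero hσ hβ (Real.sqrt_nonneg _) hRbig habar hquartic
  refine ⟨hlower, hupper, ?_⟩
  rw [← div_div]
  exact (sqrt_lt_iff_div_lt habar).1 hlower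
end

section
/- Let σ, β, R, Π be strictly positive real numbers and let a, b be real numbers satisfying the hyperbola equation 2a² − b² + (1 + 2βR/σ)ab − 2Ra + Rb = 0 and the ellipse equation 2a² + b² = 2Π/π. Then a is a root of the quartic (18σ² + 8β²R² + 8βRσ)π²a⁴ + (−12π²Rσ² + 8π²βR²σ)a³ + (6π²R²σ² − 8πΠβ²R² − 18πΠσ² − 8πΠβRσ)a² + (−8ΠβR²σ + 4ΠRσ²)πa + (4Π² − 2πΠR²)σ² = 0. -/
/-!
The ellipse expresses `b ^ 2` through `a`, so modulo the ellipse the hyperbola is linear in `b`,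
say `u + v * y = 0` with `y = π * b` and `y ^ 2 = d`, where `u`, `v`, `d` are free of `b`.
Multiplying by the conjugate `u - v * y` removes `y`, and the resulting `u ^ 2 - d * v ^ 2` is
the quartic. Once the denominators `σ` and `π` are cleared this is a polynomial identity, in
which `π` may be any `p`.
-/

theorem sq_sub_mul_sq_eq_zero_of_add_mul_eq_zero {A : Type*} [CommRing A] {u v y d : A}
    (hlin : u + v * y = 0) (hy : y ^ 2 = d) : u ^ 2 - d * v ^ 2 = 0 :=
  calc u ^ 2 - d * v ^ 2 = (u + v * y) * (u - v * y) := by rw [← hy]; ring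
    _ = 0 := by rw [hlin, zero_mul]

theorem hyperbola_clear_denom {K : Type*} [Field K] {σ β R a b : K} (hσ : σ ≠ 0)
    (hhyp : 2 * a ^ 2 - b ^ 2 + (1 + 2 * β * R / σ) * a * b - 2 * R * a + R * b = 0) :
    σ * (2 * a ^ 2 - b ^ 2 - 2 * R * a + R * b) + (σ + 2 * β * R) * a * b = 0 := by
  have hcoeff : σ * (1 + 2 * β * R / σ) = σ + 2 * β * R := by
    rw [mul_add, mul_one, mul_div_cancel₀ _ hσ]
  linear_combination σ * hhyp - a * b * hcoeff

theorem stmt_14_general {A : Type*} [CommRing A] {σ β R P p a b : A}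
    (hhyp : σ * (2 * a ^ 2 - b ^ 2 - 2 * R * a + R * b) + (σ + 2 * β * R) * a * b = 0)
    (hell : (2 * a ^ 2 + b ^ 2) * p = 2 * P) :
    (18 * σ ^ 2 + 8 * β ^ 2 * R ^ 2 + 8 * β * R * σ) * p ^ 2 * a ^ 4
      + (-12 * p ^ 2 * R * σ ^ 2 + 8 * p ^ 2 * β * R ^ 2 * σ) * a ^ 3
      + (6 * p ^ 2 * R ^ 2 * σ ^ 2 - 8 * p * P * β ^ 2 * R ^ 2
          - 18 * p * P * σ ^ 2 - 8 * p * P * β * R * σ) * a ^ 2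
      + (-8 * P * β * R ^ 2 * σ + 4 * P * R * σ ^ 2) * p * a
      + (4 * P ^ 2 - 2 * p * P * R ^ 2) * σ ^ 2 = 0 := by
  have hlin : σ * (4 * p * a ^ 2 - 2 * P - 2 * p * R * a)
      + ((σ + 2 * β * R) * a + R * σ) * (p * b) = 0 := by
    linear_combination p * hhyp + σ * hell
  have hsq : (p * b) ^ 2 = p * (2 * P - 2 * p * a ^ 2) := by
    linear_combination p * hell
  linear_combination sq_sub_mul_sq_eq_zero_of_add_mul_eq_zero hlin hsq

/-- If (a, b) lies on the hyperbola 2a² − b² + (1 + 2βR/σ)ab − 2Ra + Rb = 0 and on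
the ellipse 2a² + b² = 2Π/π (Π written `P`), then a is a root of the eliminant quartic. -/
theorem stmt_14 (σ β R P a b : ℝ) (hσ : 0 < σ) (hβ : 0 < β) (hR : 0 < R) (hP : 0 < P)
    (hhyp : 2 * a ^ 2 - b ^ 2 + (1 + 2 * β * R / σ) * a * b - 2 * R * a + R * b = 0)
    (hell : 2 * a ^ 2 + b ^ 2 = 2 * P / Real.pi) :
    (18 * σ ^ 2 + 8 * β ^ 2 * R ^ 2 + 8 * β * R * σ) * Real.pi ^ 2 * a ^ 4
      + (-12 * Real.pi ^ 2 * R * σ ^ 2 + 8 * Real.pi ^ 2 * β * R ^ 2 * σ) * a ^ 3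
      + (6 * Real.pi ^ 2 * R ^ 2 * σ ^ 2 - 8 * Real.pi * P * β ^ 2 * R ^ 2
          - 18 * Real.pi * P * σ ^ 2 - 8 * Real.pi * P * β * R * σ) * a ^ 2
      + (-8 * P * β * R ^ 2 * σ + 4 * P * R * σ ^ 2) * Real.pi * a
      + (4 * P ^ 2 - 2 * Real.pi * P * R ^ 2) * σ ^ 2 = 0 :=
  stmt_14_general (hyperbola_clear_denom hσ.ne' hhyp) ((eq_div_iff Real.pi_ne_zero).mp hell)
end

section
/- Let σ, β, R, Π be strictly positive real numbers and set a = √(8Π/(9π)) and b = √(2Π/(9π)) (so that a = 2b and 2a² + b² = 2Π/π). Then the pair (a, b) satisfies the hyperbola equation 2a² − b² + (1 + 2βR/σ)ab − 2Ra + Rb = 0 if and only if Π/(πR²) = 2/(2 + 8βR/(9σ))². -/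
/-!
On the cusp line `a = 2 * b` the hyperbola polynomial factors as `b * ((9 + 4 * k) * b - 3 * R)`
with `k = β * R / σ`, so a nontrivial zero satisfies `(9 + 4 * k) * b = 3 * R`. The area ratio
sees only the square of this equation, and nothing is lost by squaring: for `b > 0` both sides have
the same sign exactly when `0 < R * (9 + 4 * k)`.
-/

namespace Limacon

/-- The area `π * a ^ 2 + (π / 2) * b ^ 2` enclosed by the limaçon of Pascal
`r θ = a + b * cos θ` when `|b| ≤ a`; it is the quantity held fixed in the variational problem. -/
noncomputable def area (a b : ℝ) : ℝ :=
  Real.pi * a ^ 2 + Real.pi / 2 * b ^ 2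

/-- The left-hand side of the Euler–Lagrange equation (a hyperbola in `a` and `b`) for a limaçon
section along a circular midline of radius `R`. The physical constants enter only through the
dimensionless ratio `k = β * R / σ` of elasticity to surface tension. -/
def eulerLagrange (k R a b : ℝ) : ℝ :=
  2 * a ^ 2 - b ^ 2 + (1 + 2 * k) * a * b - 2 * R * a + R * b

/-- The paper's threshold `τ`, with `k = β * R / σ`: the value of `Π / (π * R ^ 2)` below which
the critical limaçon has cusps. -/
noncomputable def cuspThreshold (k : ℝ) : ℝ :=
  2 / (2 + 8 / 9 * k) ^ 2

theorem area_two_mul_self (b : ℝ) : area (2 * b) b = 9 / 2 * Real.pi * b ^ 2 := by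
  unfold area
  ring

theorem area_two_mul_sqrt {P : ℝ} (hP : 0 ≤ P) :
    area (2 * Real.sqrt (2 * P / (9 * Real.pi))) (Real.sqrt (2 * P / (9 * Real.pi))) = P := by
  rw [area_two_mul_self, Real.sq_sqrt (by positivity)]
  field_simp

theorem sqrt_eight_mul_div_eq_two_mul_sqrt (x y : ℝ) :
    Real.sqrt (8 * x / y) = 2 * Real.sqrt (2 * x / y) := by
  rw [show 8 * x / y = 2 ^ 2 * (2 * x / y) by ring, Real.sqrt_mul (by norm_num),
    Real.sqrt_sq (by norm_num)]

theorem eulerLagrange_two_mul_self (k R b : ℝ) :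
    eulerLagrange k R (2 * b) b = b * ((9 + 4 * k) * b - 3 * R) := by
  unfold eulerLagrange
  ring

theorem eulerLagrange_two_mul_self_eq_zero_iff {b : ℝ} (k R : ℝ) (hb : b ≠ 0) :
    eulerLagrange k R (2 * b) b = 0 ↔ (9 + 4 * k) * b = 3 * R := by
  rw [eulerLagrange_two_mul_self, mul_eq_zero_iff_left hb, sub_eq_zero]

theorem cuspThreshold_eq (k : ℝ) : cuspThreshold k = 81 / (2 * (9 + 4 * k) ^ 2) := by
  rw [cuspThreshold, show 2 + 8 / 9 * k = 2 / 9 * (9 + 4 * k) by ring]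
  -- Otherwise `ring` expands the square inside the denominators.
  generalize 9 + 4 * k = y
  ring

theorem area_div_eq_cuspThreshold_iff {k R : ℝ} (b : ℝ) (hR : R ≠ 0) (hk : 9 + 4 * k ≠ 0) :
    area (2 * b) b / (Real.pi * R ^ 2) = cuspThreshold k ↔
      ((9 + 4 * k) * b) ^ 2 = (3 * R) ^ 2 := by
  rw [area_two_mul_self, cuspThreshold_eq, div_eq_div_iff (by positivity) (by positivity)]
  have cross_mul_sub : 9 / 2 * Real.pi * b ^ 2 * (2 * (9 + 4 * k) ^ 2) - 81 * (Real.pi * R ^ 2) =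
      9 * Real.pi * (((9 + 4 * k) * b) ^ 2 - (3 * R) ^ 2) := by ring
  rw [← sub_eq_zero, cross_mul_sub, mul_eq_zero_iff_left (by positivity), sub_eq_zero]

theorem sq_eq_sq_iff_of_mul_pos {α : Type*} [CommRing α] [LinearOrder α] [IsStrictOrderedRing α]
    {x y : α} (h : 0 < x * y) : x ^ 2 = y ^ 2 ↔ x = y := by
  refine ⟨fun hsq ↦ (sq_eq_sq_iff_eq_or_eq_neg.mp hsq).resolve_right ?_, congrArg (· ^ 2)⟩
  rintro rfl
  linarith [mul_self_nonneg y]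

theorem eulerLagrange_eq_zero_iff_area_div_eq_cuspThreshold {k R b : ℝ} (hb : 0 < b)
    (hRk : 0 < R * (9 + 4 * k)) :
    eulerLagrange k R (2 * b) b = 0 ↔ area (2 * b) b / (Real.pi * R ^ 2) = cuspThreshold k := by
  have same_sign : 0 < (9 + 4 * k) * b * (3 * R) := by
    linear_combination (3 * b) * hRk
  rw [eulerLagrange_two_mul_self_eq_zero_iff k R hb.ne',
    area_div_eq_cuspThreshold_iff b (left_ne_zero_of_mul hRk.ne') (right_ne_zero_of_mul hRk.ne'),
    sq_eq_sq_iff_of_mul_pos same_sign]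

end Limacon

open Limacon in
theorem stmt_15_general {k R P : ℝ} (hP : 0 < P) (hRk : 0 < R * (9 + 4 * k)) :
    eulerLagrange k R (Real.sqrt (8 * P / (9 * Real.pi))) (Real.sqrt (2 * P / (9 * Real.pi))) = 0 ↔
      P / (Real.pi * R ^ 2) = cuspThreshold k := by
  have hb : 0 < Real.sqrt (2 * P / (9 * Real.pi)) := Real.sqrt_pos.mpr (by positivity)
  rw [sqrt_eight_mul_div_eq_two_mul_sqrt,
    eulerLagrange_eq_zero_iff_area_div_eq_cuspThreshold hb hRk, area_two_mul_sqrt hP.le]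

/-- For a = √(8Π/(9π)), b = √(2Π/(9π)) (Π written `P`), the pair (a, b) satisfies the
hyperbola equation 2a² − b² + (1 + 2βR/σ)ab − 2Ra + Rb = 0 if and only if
Π/(πR²) = 2/(2 + 8βR/(9σ))². -/
theorem stmt_15 (σ β R P : ℝ) (hσ : 0 < σ) (hβ : 0 < β) (hR : 0 < R) (hP : 0 < P) :
    (2 * (Real.sqrt (8 * P / (9 * Real.pi))) ^ 2 - (Real.sqrt (2 * P / (9 * Real.pi))) ^ 2
        + (1 + 2 * β * R / σ) * Real.sqrt (8 * P / (9 * Real.pi))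
            * Real.sqrt (2 * P / (9 * Real.pi))
        - 2 * R * Real.sqrt (8 * P / (9 * Real.pi))
        + R * Real.sqrt (2 * P / (9 * Real.pi)) = 0
      ↔ P / (Real.pi * R ^ 2) = 2 / (2 + 8 * β * R / (9 * σ)) ^ 2) := by
  have general := stmt_15_general (k := β * R / σ) (R := R) hP (by positivity)
  simpa only [Limacon.eulerLagrange, Limacon.cuspThreshold, mul_assoc 2 β R, mul_assoc 8 β R,
    mul_div_assoc 2 (β * R) σ, mul_div_mul_comm 8 (β * R) 9 σ] using general
end
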